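/- arXiv:1107.4879 — 2 statements merged into one kernel-verified Lean document; each statement's English description precedes it below -/
import Mathlib

section
/- For any graph G without isolated vertices, sp_1(G) = sp_2(G) = sp_3(G), where sp_1(G) is the minimum k such that G has a [1,k]-factor, sp_2(G) is the minimum k such that G has a spanning k-edge-colorable subgraph, and sp_3(G) is the minimum k such that G has a spanning maximum k-edge-colorable subgraph. -/
/-!
The three sets of integers `k` whose minima define `sp1`, `sp2`, `sp3` are equal.

* A spanning `k`-edge-colorable subgraph is a `[1,k]`-factor, since the edges at a vertex carry
  distinct colors (`degree_le_of_coloring`).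
* A `[1,k]`-factor with the fewest edges is a disjoint union of stars: an edge with both ends of
  degree at least two could be deleted. Such a star forest is `k`-edge-colored by numbering the
  edges at the center of each star (`exists_colorable_of_factor`).
* Let `F` be spanning and `k`-edge-colorable, and let `H` be a maximum `k`-edge-colorable subgraph
  sharing as many edges as possible with `F`. If `H` misses a vertex `v`, take an edge `vw` of `F`.
  All `k` colors occur in `H` at `w`, as otherwise `vw` could be added to `H`. So `w` has `k`
  neighbors in `H`, but at most `k` neighbors in `F`, one of which is `v`; hence some edge `wu` of
  `H` is not in `F`. Replacing `wu` by `vw`, with the color of `wu`, gives a maximum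
  `k`-edge-colorable subgraph with a larger intersection with `F`, a contradiction
  (`exists_spanning_maximum`).
-/

open SimpleGraph

variable {V : Type*}

/-- A subgraph is spanning if every vertex of the host graph has a neighbor in it. -/
def SpanningSub {G : SimpleGraph V} (H : G.Subgraph) : Prop :=
  ∀ v : V, ∃ w : V, H.Adj v w

/-- A subgraph is `k`-edge-colorable if its edges can be properly colored with `k` colors,
i.e. its edge set can be partitioned into `k` matchings. -/
def EdgeColorable {G : SimpleGraph V} (H : G.Subgraph) (k : ℕ) : Prop :=
  ∃ f : H.edgeSet → Fin k, ∀ e₁ e₂ : H.edgeSet, e₁ ≠ e₂ →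
    (∃ v : V, v ∈ (e₁ : Sym2 V) ∧ v ∈ (e₂ : Sym2 V)) → f e₁ ≠ f e₂

/-- A maximum `k`-edge-colorable subgraph: `k`-edge-colorable with as many edges as possible. -/
def MaximumEdgeColorable {G : SimpleGraph V} (H : G.Subgraph) (k : ℕ) : Prop :=
  EdgeColorable H k ∧
    ∀ H' : G.Subgraph, EdgeColorable H' k → H'.edgeSet.ncard ≤ H.edgeSet.ncard

/-- `sp G`: the least `k` such that `G` has a spanning `k`-edge-colorable subgraph. -/
noncomputable def sp (G : SimpleGraph V) : ℕ :=
  sInf {k | ∃ H : G.Subgraph, SpanningSub H ∧ EdgeColorable H k}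

/-- Maximum degree. -/
noncomputable def maxDeg (G : SimpleGraph V) : ℕ :=
  sSup (Set.range fun v : V => (G.neighborSet v).ncard)

/-- Minimum degree. -/
noncomputable def minDeg (G : SimpleGraph V) : ℕ :=
  sInf (Set.range fun v : V => (G.neighborSet v).ncard)

/-- Matching number. -/
noncomputable def matchNum (G : SimpleGraph V) : ℕ :=
  sSup {n | ∃ M : G.Subgraph, M.IsMatching ∧ M.edgeSet.ncard = n}

/-- A `[1,k]`-factor: a spanning subgraph in which every vertex has degree between 1 and k. -/
def IsOneKFactor {V : Type*} {G : SimpleGraph V} (H : G.Subgraph) (k : ℕ) : Prop :=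
  ∀ v : V, 1 ≤ (H.neighborSet v).ncard ∧ (H.neighborSet v).ncard ≤ k

noncomputable def sp1 {V : Type*} (G : SimpleGraph V) : ℕ :=
  sInf {k | ∃ H : G.Subgraph, IsOneKFactor H k}

noncomputable def sp2 {V : Type*} (G : SimpleGraph V) : ℕ :=
  sInf {k | ∃ H : G.Subgraph, SpanningSub H ∧ EdgeColorable H k}

noncomputable def sp3 {V : Type*} (G : SimpleGraph V) : ℕ :=
  sInf {k | ∃ H : G.Subgraph, SpanningSub H ∧ MaximumEdgeColorable H k}

/-- A proper edge coloring of `H` with colors `0, …, k - 1`, given as a function on all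
unordered pairs; only its values on the edges of `H` matter. -/
def ProperColoring {G : SimpleGraph V} (H : G.Subgraph) (k : ℕ) (c : Sym2 V → ℕ) : Prop :=
  (∀ v w, H.Adj v w → c s(v, w) < k) ∧
    ∀ v w w', H.Adj v w → H.Adj v w' → c s(v, w) = c s(v, w') → w = w'

theorem edgeColorable_iff {G : SimpleGraph V} (H : G.Subgraph) (k : ℕ) :
    EdgeColorable H k ↔ ∃ c, ProperColoring H k c := by
  classical
  constructor
  · rintro ⟨f, hf⟩
    refine ⟨fun e => if h : e ∈ H.edgeSet then f ⟨e, h⟩ else 0, ?_, ?_⟩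
    · intro v w h
      have h' : s(v, w) ∈ H.edgeSet := h
      simp only [h', dif_pos, Fin.is_lt]
    · intro v w w' h h' hc
      have h1 : s(v, w) ∈ H.edgeSet := h
      have h2 : s(v, w') ∈ H.edgeSet := h'
      simp only [h1, h2, dif_pos] at hc
      by_contra hne
      refine hf ⟨_, h1⟩ ⟨_, h2⟩ ?_ ⟨v, by simp, by simp⟩ (Fin.ext hc)
      intro he
      exact hne (Sym2.congr_right.1 (congrArg Subtype.val he))
  · rintro ⟨c, hc1, hc2⟩
    have hlt : ∀ e ∈ H.edgeSet, c e < k := by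
      intro e
      induction e with
      | _ v w => exact hc1 v w
    refine ⟨fun e => ⟨c e, hlt e e.2⟩, ?_⟩
    rintro ⟨e₁, h₁⟩ ⟨e₂, h₂⟩ hne ⟨v, hv₁, hv₂⟩ heq
    obtain ⟨w, rfl⟩ := hv₁
    obtain ⟨w', rfl⟩ := hv₂
    apply hne
    have := hc2 v w w' h₁ h₂ (congrArg Fin.val heq)
    subst this
    rfl

/-- The subgraph on all vertices with a prescribed set of edges. -/
def ofEdges {G : SimpleGraph V} (E : Set (Sym2 V)) (hE : E ⊆ G.edgeSet) : G.Subgraph where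
  verts := Set.univ
  Adj a b := s(a, b) ∈ E
  adj_sub h := hE h
  edge_vert _ := Set.mem_univ _
  symm := ⟨fun a b h => by rwa [Sym2.eq_swap]⟩

theorem edgeSet_ofEdges {G : SimpleGraph V} (E : Set (Sym2 V)) (hE : E ⊆ G.edgeSet) :
    (ofEdges E hE).edgeSet = E := by
  ext e
  induction e with
  | _ a b => rfl

theorem degree_le_of_coloring {G : SimpleGraph V} {H : G.Subgraph} {k : ℕ} {c : Sym2 V → ℕ}
    (hc : ProperColoring H k c) (v : V) : (H.neighborSet v).ncard ≤ k := by
  have := Set.ncard_le_ncard_of_injOn (s := H.neighborSet v) (t := Set.Iio k)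
    (fun w => c s(v, w)) (fun w hw => hc.1 v w hw)
    (fun w hw w' hw' h => hc.2 v w w' hw hw' h) (Set.finite_Iio k)
  simpa using this

theorem isOneKFactor_iff [Finite V] {G : SimpleGraph V} (H : G.Subgraph) (k : ℕ) :
    IsOneKFactor H k ↔ SpanningSub H ∧ ∀ v, (H.neighborSet v).ncard ≤ k := by
  have key : ∀ v, 1 ≤ (H.neighborSet v).ncard ↔ ∃ w, H.Adj v w := fun v => by
    rw [Nat.one_le_iff_ne_zero, ← Nat.pos_iff_ne_zero, Set.ncard_pos (Set.toFinite _)]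
    rfl
  simp only [IsOneKFactor, SpanningSub, key, forall_and]

/-- In a `[1,k]`-factor with the fewest edges, every edge has an end of degree one. -/
theorem leaf_of_minimal [Finite V] {G : SimpleGraph V} {H : G.Subgraph} {k : ℕ}
    (hH : IsOneKFactor H k)
    (hmin : ∀ H' : G.Subgraph, IsOneKFactor H' k → H.edgeSet.ncard ≤ H'.edgeSet.ncard)
    {a b : V} (hab : H.Adj a b) :
    (∀ x, H.Adj a x → x = b) ∨ (∀ x, H.Adj b x → x = a) := by
  by_contra! hcon
  obtain ⟨⟨x, hx, hxb⟩, y, hy, hya⟩ := hcon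
  rw [isOneKFactor_iff] at hH
  have hE : H.edgeSet \ {s(a, b)} ⊆ G.edgeSet := Set.sdiff_subset.trans H.edgeSet_subset
  have hlt : (ofEdges _ hE).edgeSet.ncard < H.edgeSet.ncard := by
    rw [edgeSet_ofEdges]
    exact Set.ncard_sdiff_singleton_lt_of_mem hab (Set.toFinite _)
  refine absurd (hmin (ofEdges _ hE) ?_) (not_le.2 hlt)
  rw [isOneKFactor_iff]
  constructor
  · intro v
    by_cases hva : v = a
    · subst hva
      exact ⟨x, hx, fun h => hxb (Sym2.congr_right.1 h)⟩
    by_cases hvb : v = b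
    · subst hvb
      exact ⟨y, hy, fun h => hya (Sym2.congr_right.1 ((h : s(v, y) = s(a, v)).trans Sym2.eq_swap))⟩
    obtain ⟨w, hw⟩ := hH.1 v
    refine ⟨w, hw, fun h => ?_⟩
    rcases Sym2.mem_iff.1 ((h : s(v, w) = s(a, b)) ▸ Sym2.mem_mk_left v w) with h | h
    · exact hva h
    · exact hvb h
  · intro v
    exact (Set.ncard_le_ncard (fun w hw => hw.1) (Set.toFinite _)).trans (hH.2 v)

theorem exists_colorable_of_factor [Finite V] {G : SimpleGraph V} {k : ℕ}
    (h : ∃ H : G.Subgraph, IsOneKFactor H k) :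
    ∃ H : G.Subgraph, SpanningSub H ∧ EdgeColorable H k := by
  obtain ⟨H, hH, hmin⟩ := Set.exists_min_image {H : G.Subgraph | IsOneKFactor H k}
    (fun H => H.edgeSet.ncard) (Set.toFinite _) h
  have hleaf : ∀ {a b}, H.Adj a b → _ := fun hab => leaf_of_minimal hH hmin hab
  have hH' := (isOneKFactor_iff H k).1 hH
  refine ⟨H, hH'.1, (edgeColorable_iff H k).2 ?_⟩
  -- `g v` numbers the neighbors of `v`.
  have hg : ∀ v, ∃ g : V → ℕ, (∀ w, H.Adj v w → g w < k) ∧ Set.InjOn g (H.neighborSet v) := by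
    intro v
    have hfin : (H.neighborSet v).Finite := Set.toFinite _
    obtain ⟨g, hg1, hg2⟩ := (Set.Finite.exists_injOn_of_encard_le (t := Set.Iio k) hfin (by
      rw [← hfin.cast_ncard_eq, ← (Set.finite_Iio k).cast_ncard_eq]
      have h3 : (Set.Iio k).ncard = k := by simp
      rw [h3]
      exact_mod_cast hH'.2 v))
    exact ⟨g, fun w hw => hg1 hw, hg2⟩
  choose g hg1 hg2 using hg
  -- `p e` lists the ends of the edge `e`, center first and leaf second.
  have hp : ∀ e : Sym2 V, ∃ p : V × V, e ∈ H.edgeSet →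
      e = s(p.1, p.2) ∧ ∀ x, H.Adj p.2 x → x = p.1 := by
    intro e
    induction e with
    | _ a b =>
      by_cases hab : H.Adj a b
      · rcases hleaf hab with h | h
        · exact ⟨(b, a), fun _ => ⟨Sym2.eq_swap, h⟩⟩
        · exact ⟨(a, b), fun _ => ⟨rfl, h⟩⟩
      · exact ⟨(a, b), fun h => absurd h hab⟩
  choose p hp using hp
  refine ⟨fun e => g (p e).1 (p e).2, ?_, ?_⟩
  · intro v w hvw
    have h := (hp s(v, w) hvw).1
    apply hg1
    have : s((p s(v, w)).1, (p s(v, w)).2) ∈ H.edgeSet := h ▸ hvw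
    exact this
  · intro v w w' hw hw' heq
    by_contra hne
    -- A vertex on two distinct edges is not a leaf, hence is the center of both.
    have key : ∀ {x y}, H.Adj v x → H.Adj v y → x ≠ y → p s(v, x) = (v, x) := by
      intro x y hx hy hxy
      obtain ⟨h1, h2⟩ := hp s(v, x) hx
      rcases Sym2.eq_iff.1 h1 with ⟨h, h'⟩ | ⟨h, h'⟩
      · exact Prod.ext h.symm h'.symm
      · rw [← h, ← h'] at h2
        exact absurd (h2 y hy).symm hxy
    simp only [key hw hw' hne, key hw' hw (Ne.symm hne)] at heq
    exact hne (hg2 v hw hw' heq)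

/-- If `H` misses `v`, the edge `vw` may be inserted with color `i` once the edges of color `i`
at `w` have been removed. -/
theorem colorable_insert {G : SimpleGraph V} {H : G.Subgraph} {k : ℕ} {c : Sym2 V → ℕ}
    (hc : ProperColoring H k c) {v w : V} (hv : ∀ x, ¬ H.Adj v x) (hne : v ≠ w)
    {i : ℕ} (hi : i < k) (D : Set (Sym2 V))
    (hD : ∀ u, H.Adj w u → c s(w, u) = i → s(w, u) ∈ D)
    (hE : insert s(v, w) (H.edgeSet \ D) ⊆ G.edgeSet) :
    EdgeColorable (ofEdges _ hE) k := by
  classical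
  rw [edgeColorable_iff]
  refine ⟨Function.update c s(v, w) i, ?_, ?_⟩
  · intro a b hab
    by_cases h : s(a, b) = s(v, w)
    · simpa [h] using hi
    · rw [Function.update_of_ne h]
      exact hc.1 a b (hab.resolve_left h).1
  -- The new edge cannot clash with an old edge at the common end `a`.
  · have key : ∀ a b b', s(a, b) = s(v, w) → s(a, b') ∈ H.edgeSet \ D → c s(a, b') ≠ i := by
      intro a b b' h h' hi'
      rcases Sym2.eq_iff.1 h with ⟨rfl, rfl⟩ | ⟨rfl, rfl⟩
      · exact hv _ h'.1
      · exact h'.2 (hD _ h'.1 hi')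
    intro a b b' hb hb' heq
    by_cases h : s(a, b) = s(v, w) <;> by_cases h' : s(a, b') = s(v, w)
    · exact Sym2.congr_right.1 (h.trans h'.symm)
    · rw [h, Function.update_self, Function.update_of_ne h'] at heq
      exact absurd heq.symm (key a b b' h (hb'.resolve_left h'))
    · rw [h', Function.update_self, Function.update_of_ne h] at heq
      exact absurd heq (key a b' b h' (hb.resolve_left h))
    · rw [Function.update_of_ne h, Function.update_of_ne h'] at heq
      exact hc.2 a b b' (hb.resolve_left h).1 (hb'.resolve_left h').1 heq

theorem exists_spanning_maximum [Finite V] {G : SimpleGraph V} {k : ℕ}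
    (h : ∃ F : G.Subgraph, SpanningSub F ∧ EdgeColorable F k) :
    ∃ H : G.Subgraph, SpanningSub H ∧ MaximumEdgeColorable H k := by
  obtain ⟨F, hF, hFk⟩ := h
  obtain ⟨H₀, hH₀, hmax₀⟩ := Set.exists_max_image {H : G.Subgraph | EdgeColorable H k}
    (fun H => H.edgeSet.ncard) (Set.toFinite _) ⟨F, hFk⟩
  obtain ⟨H, hH, hmax⟩ := Set.exists_max_image {H : G.Subgraph | MaximumEdgeColorable H k}
    (fun H => (H.edgeSet ∩ F.edgeSet).ncard) (Set.toFinite _) ⟨H₀, hH₀, hmax₀⟩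
  refine ⟨H, ?_, hH⟩
  intro v
  by_contra! hv
  obtain ⟨w, hvw⟩ := hF v
  have hne : v ≠ w := hvw.ne
  have hG : s(v, w) ∈ G.edgeSet := F.adj_sub hvw
  have hE : ∀ D, insert s(v, w) (H.edgeSet \ D) ⊆ G.edgeSet := fun D =>
    Set.insert_subset hG (Set.sdiff_subset.trans H.edgeSet_subset)
  have hnot : s(v, w) ∉ H.edgeSet := hv w
  obtain ⟨c, hc⟩ := (edgeColorable_iff H k).1 hH.1
  have hall : ∀ i < k, ∃ u, H.Adj w u ∧ c s(w, u) = i := by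
    intro i hi
    by_contra! hno
    have hcol := colorable_insert hc hv hne hi ∅ (fun u hu h => absurd h (hno u hu)) (hE ∅)
    have hle := hH.2 _ hcol
    rw [edgeSet_ofEdges, Set.sdiff_empty, Set.ncard_insert_of_notMem hnot (Set.toFinite _)] at hle
    omega
  have hdeg : k ≤ (H.neighborSet w).ncard := by
    have hsub : Set.Iio k ⊆ (fun u => c s(w, u)) '' H.neighborSet w := fun i hi => hall i hi
    have h1 := Set.ncard_le_ncard hsub (Set.toFinite _)
    have h2 := Set.ncard_image_le (f := fun u => c s(w, u)) (Set.toFinite (H.neighborSet w))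
    have h3 : (Set.Iio k).ncard = k := by simp
    omega
  have hu : ∃ u, H.Adj w u ∧ ¬ F.Adj w u := by
    by_contra! hsub
    obtain ⟨d, hd⟩ := (edgeColorable_iff F k).1 hFk
    have hss : H.neighborSet w ⊂ F.neighborSet w :=
      ⟨hsub, fun hle => hv w (H.adj_symm (hle (F.adj_symm hvw)))⟩
    have h1 := Set.ncard_lt_ncard hss (Set.toFinite _)
    have h2 := degree_le_of_coloring hd w
    omega
  obtain ⟨u, hwu, hFu⟩ := hu
  have hcol := colorable_insert hc hv hne (hc.1 w u hwu) {s(w, u)}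
    (fun x hx h => by rw [hc.2 w x u hx hwu h]; rfl) (hE _)
  have hmem : s(w, u) ∈ H.edgeSet := hwu
  have hcard : (ofEdges _ (hE {s(w, u)})).edgeSet.ncard = H.edgeSet.ncard := by
    rw [edgeSet_ofEdges, Set.ncard_insert_of_notMem (fun h => hnot h.1) (Set.toFinite _),
      Set.ncard_sdiff_singleton_add_one hmem (Set.toFinite _)]
  have hle := hmax (ofEdges _ (hE {s(w, u)})) ⟨hcol, fun H' hH' => hcard ▸ hH.2 H' hH'⟩
  rw [edgeSet_ofEdges] at hle
  have hss : H.edgeSet ∩ F.edgeSet ⊂ insert s(v, w) (H.edgeSet \ {s(w, u)}) ∩ F.edgeSet := by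
    refine ⟨fun e he => ⟨Or.inr ⟨he.1, ?_⟩, he.2⟩, fun hsub => ?_⟩
    · rintro rfl
      exact hFu he.2
    · exact hnot (hsub ⟨Or.inl rfl, hvw⟩).1
  exact absurd hle (not_le.2 (Set.ncard_lt_ncard hss (Set.toFinite _)))

/-- For any graph without isolated vertices, the three parameters coincide. -/
theorem sp1_eq_sp2_eq_sp3 {V : Type*} [Fintype V] (G : SimpleGraph V)
    (hG : ∀ v : V, ∃ w : V, G.Adj v w) :
    sp1 G = sp2 G ∧ sp2 G = sp3 G := by
  refine ⟨congrArg sInf (Set.ext fun k => ⟨exists_colorable_of_factor, ?_⟩),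
    congrArg sInf (Set.ext fun k => ⟨exists_spanning_maximum, ?_⟩)⟩
  · rintro ⟨H, hH, hk⟩
    obtain ⟨c, hc⟩ := (edgeColorable_iff H k).1 hk
    exact ⟨H, (isOneKFactor_iff H k).2 ⟨hH, degree_le_of_coloring hc⟩⟩
  · rintro ⟨H, hH, hk⟩
    exact ⟨H, hH, hk.1⟩
end

section
/- Every regular graph of positive degree has a subgraph that is simultaneously spanning and a maximum 2-edge-colorable subgraph. -/
/-!
A regular graph `G` of positive degree satisfies Hall's condition for its neighbourhoods, so there
is an injective `σ : V → V` with `σ v` adjacent to `v` for every `v` (`exists_injective_adj`).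
Among all properly 2-colored edge sets `F` of `G`, take one with the most edges and, subject to
that, with the most vertices `x` whose edge `x (σ x)` lies in `F`. Such an `F` covers every vertex.

Suppose `v` is uncovered, and put `u = σ v`. If a color is missing at `u`, then `uv` can be added to
`F` with that color, so `F` was not of maximum size. Otherwise `u` has an `F`-edge of each color,
and one of these two edges, say `ub`, differs from `u (σ u)`. Replace `ub` by `uv`, keeping its
color. The result is again properly colored and has as many edges. The vertex `v` is gained in the
second count, and nothing is lost: `ub` is not `u (σ u)`, and `σ b = u = σ v` would force `b = v`.
This contradicts the choice of `F`.
-/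

open SimpleGraph

variable {V : Type*}

/-- `f` restricts to a proper edge coloring of the edge set `F`. The coloring is a total function
on `Sym2 V`; its values outside `F` are irrelevant. -/
def ProperOn {V : Type*} (F : Finset (Sym2 V)) (f : Sym2 V → Fin 2) : Prop :=
  ∀ e₁ ∈ F, ∀ e₂ ∈ F, e₁ ≠ e₂ → ∀ v, v ∈ e₁ → v ∈ e₂ → f e₁ ≠ f e₂

lemma exists_injective_adj {V : Type*} [Fintype V]
    (G : SimpleGraph V) [DecidableRel G.Adj] (r : ℕ) (hr : 0 < r)
    (hreg : G.IsRegularOfDegree r) :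
    ∃ σ : V → V, Function.Injective σ ∧ ∀ v, G.Adj v (σ v) := by
  classical
  have key := (Finset.all_card_le_biUnion_card_iff_exists_injective
    (fun v => G.neighborFinset v)).1 (by
      intro S
      -- Double counting of the edges between `S` and its neighbourhood.
      have h := Finset.card_mul_le_card_mul (s := S)
        (t := S.biUnion fun v => G.neighborFinset v) (m := r) (n := r) G.Adj ?_ ?_
      · exact Nat.le_of_mul_le_mul_right h hr
      · intro a ha
        rw [← hreg a, ← G.card_neighborFinset_eq_degree]
        apply Finset.card_le_card
        intro b hb
        rw [Finset.mem_bipartiteAbove]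
        exact ⟨Finset.mem_biUnion.2 ⟨a, ha, hb⟩, by simpa using hb⟩
      · intro b _
        rw [← hreg b, ← G.card_neighborFinset_eq_degree]
        apply Finset.card_le_card
        intro a ha
        rw [Finset.mem_bipartiteBelow] at ha
        simpa using ha.2.symm)
  obtain ⟨σ, hσ, h⟩ := key
  exact ⟨σ, hσ, fun v => by simpa using h v⟩

/-- Adding to `F` an edge `uv` at an uncovered vertex `v`, with a color missing at `u`. -/
lemma ProperOn.insert_update {V : Type*} [DecidableEq V] {F : Finset (Sym2 V)}
    {f : Sym2 V → Fin 2} (hf : ProperOn F f) {u v : V} (hv : ∀ e ∈ F, v ∉ e) {c : Fin 2}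
    (hc : ∀ e ∈ F, u ∈ e → f e ≠ c) :
    ProperOn (insert s(u, v) F) (Function.update f s(u, v) c) := by
  have hne : ∀ e ∈ F, e ≠ s(u, v) := by
    rintro e he rfl
    exact hv _ he (by simp)
  have hcol : ∀ e ∈ F, ∀ w, w ∈ s(u, v) → w ∈ e → f e ≠ c := by
    intro e he w hw hwe
    rcases Sym2.mem_iff.1 hw with rfl | rfl
    · exact hc e he hwe
    · exact absurd hwe (hv e he)
  intro e₁ h₁ e₂ h₂ h12 w hw₁ hw₂
  rcases Finset.mem_insert.1 h₁ with rfl | h₁ <;> rcases Finset.mem_insert.1 h₂ with rfl | h₂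
  · exact absurd rfl h12
  · rw [Function.update_self, Function.update_of_ne (hne _ h₂)]
    exact (hcol _ h₂ w hw₁ hw₂).symm
  · rw [Function.update_self, Function.update_of_ne (hne _ h₁)]
    exact hcol _ h₁ w hw₂ hw₁
  · rw [Function.update_of_ne (hne _ h₁), Function.update_of_ne (hne _ h₂)]
    exact hf _ h₁ _ h₂ h12 w hw₁ hw₂

lemma exists_covering_maximum {V : Type*} [Fintype V] (G : SimpleGraph V)
    (σ : V → V) (hσ : Function.Injective σ) (hadj : ∀ v, G.Adj v (σ v)) :
    ∃ F : Finset (Sym2 V), (∀ e ∈ F, e ∈ G.edgeSet) ∧ (∃ f, ProperOn F f) ∧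
      (∀ v, ∃ e ∈ F, v ∈ e) ∧
      ∀ F' : Finset (Sym2 V), (∀ e ∈ F', e ∈ G.edgeSet) → (∃ f, ProperOn F' f) →
        F'.card ≤ F.card := by
  classical
  let P : Finset (Finset (Sym2 V)) := Finset.univ.filter fun F =>
    (∀ e ∈ F, e ∈ G.edgeSet) ∧ ∃ f, ProperOn F f
  have memP : ∀ F, F ∈ P ↔ (∀ e ∈ F, e ∈ G.edgeSet) ∧ ∃ f, ProperOn F f := by simp [P]
  let A : Finset (Sym2 V) → Finset V := fun F => Finset.univ.filter fun x => s(x, σ x) ∈ F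
  have hP : P.Nonempty := ⟨∅, (memP _).2 ⟨by simp, fun _ => 0, by simp [ProperOn]⟩⟩
  obtain ⟨F, hF, hmax⟩ :=
    P.exists_max_image (fun F => toLex (F.card, (A F).card)) hP
  have hcard : ∀ F' ∈ P, F'.card ≤ F.card := by
    intro F' h
    rcases Prod.Lex.toLex_le_toLex.1 (hmax F' h) with h | h
    · exact h.le
    · exact h.1.le
  have hagree : ∀ F' ∈ P, F'.card = F.card → (A F').card ≤ (A F).card := by
    intro F' h h'
    rcases Prod.Lex.toLex_le_toLex.1 (hmax F' h) with h | h
    · exact absurd h' h.ne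
    · exact h.2
  obtain ⟨hFG, f, hf⟩ := (memP F).1 hF
  refine ⟨F, hFG, ⟨f, hf⟩, ?_, fun F' h h' => hcard F' ((memP F').2 ⟨h, h'⟩)⟩
  by_contra! hcon
  obtain ⟨v, hv⟩ := hcon
  have huv : s(σ v, v) ∈ G.edgeSet := (hadj v).symm
  have hnot : s(σ v, v) ∉ F := fun h => hv _ h (by simp)
  by_cases hfree : ∃ c, ∀ e ∈ F, σ v ∈ e → f e ≠ c
  · obtain ⟨c, hc⟩ := hfree
    have := hcard (insert s(σ v, v) F) ((memP _).2 ⟨by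
      intro e he
      rcases Finset.mem_insert.1 he with rfl | he
      · exact huv
      · exact hFG e he, _, hf.insert_update hv hc⟩)
    rw [Finset.card_insert_of_notMem hnot] at this
    omega
  · push Not at hfree
    obtain ⟨e₀, he₀, hu₀, hc₀⟩ := hfree 0
    obtain ⟨e₁, he₁, hu₁, hc₁⟩ := hfree 1
    obtain ⟨e, he, hue, hne⟩ : ∃ e ∈ F, σ v ∈ e ∧ e ≠ s(σ v, σ (σ v)) := by
      by_cases h : e₀ = s(σ v, σ (σ v))
      · refine ⟨e₁, he₁, hu₁, ?_⟩
        rintro h'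
        rw [h', ← h, hc₀] at hc₁
        exact absurd hc₁ (by decide)
      · exact ⟨e₀, he₀, hu₀, h⟩
    have hsub : ∀ e' ∈ F.erase e, e' ∈ F := fun e' h => Finset.mem_of_mem_erase h
    have hf' : ProperOn (F.erase e) f := fun a ha b hb => hf a (hsub a ha) b (hsub b hb)
    have hF' : insert s(σ v, v) (F.erase e) ∈ P := (memP _).2 ⟨by
      intro e' he'
      rcases Finset.mem_insert.1 he' with rfl | he'
      · exact huv
      · exact hFG e' (hsub _ he'), _, hf'.insert_update (c := f e) (fun a ha => hv a (hsub a ha))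
        (fun a ha hua => hf a (hsub a ha) e he (Finset.ne_of_mem_erase ha) _ hua hue)⟩
    have h1 := hagree _ hF' (by
      rw [Finset.card_insert_of_notMem (fun h => hnot (hsub _ h)), Finset.card_erase_add_one he])
    refine absurd h1 (not_le.2 (Finset.card_lt_card ?_))
    rw [Finset.ssubset_iff_of_subset]
    · refine ⟨v, ?_, ?_⟩
      · simp [A, Sym2.eq_swap]
      · simpa [A, Sym2.eq_swap] using hnot
    · intro x hx
      simp only [A, Finset.mem_filter, Finset.mem_univ, true_and] at hx ⊢
      refine Finset.mem_insert_of_mem (Finset.mem_erase.2 ⟨?_, hx⟩)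
      rintro rfl
      rcases Sym2.mem_iff.1 hue with h | h
      · exact hne (by rw [h])
      · exact hv _ hx (by rw [hσ h]; simp)

/-- Every regular graph of positive degree has a subgraph that is simultaneously spanning
and a maximum 2-edge-colorable subgraph. -/
theorem regular_spanning_maximum_two_edge_colorable {V : Type*} [Fintype V]
    (G : SimpleGraph V) [DecidableRel G.Adj] (r : ℕ) (hr : 0 < r) (hreg : G.IsRegularOfDegree r) :
    ∃ H : G.Subgraph, SpanningSub H ∧ MaximumEdgeColorable H 2 := by
  classical
  obtain ⟨σ, hσ, hadj⟩ := exists_injective_adj G r hr hreg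
  obtain ⟨F, hFG, ⟨f, hf⟩, hcov, hmax⟩ := exists_covering_maximum G σ hσ hadj
  let H : G.Subgraph :=
    { verts := Set.univ
      Adj := fun a b => s(a, b) ∈ F
      adj_sub := fun h => hFG _ h
      edge_vert := fun _ => Set.mem_univ _
      symm := ⟨fun a b h => by rwa [Sym2.eq_swap]⟩ }
  have hH : H.edgeSet = (F : Set (Sym2 V)) := by
    ext e
    induction e with
    | h a b => rfl
  have hHF : ∀ e : H.edgeSet, (e : Sym2 V) ∈ F := fun e => by
    rw [← Finset.mem_coe, ← hH]
    exact e.2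
  refine ⟨H, ?_, ⟨fun e => f e, ?_⟩, ?_⟩
  · intro v
    obtain ⟨e, he, hve⟩ := hcov v
    obtain ⟨w, rfl⟩ := hve
    exact ⟨w, he⟩
  · rintro e₁ e₂ hne ⟨v, h₁, h₂⟩
    exact hf _ (hHF e₁) _ (hHF e₂) (fun h => hne (Subtype.ext h)) v h₁ h₂
  · rintro H' ⟨g, hg⟩
    have := hmax H'.edgeSet.toFinset (fun e he => H'.edgeSet_subset (by simpa using he))
      ⟨fun e => if h : e ∈ H'.edgeSet then g ⟨e, h⟩ else 0, by
        intro e₁ h₁ e₂ h₂ hne v hv₁ hv₂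
        rw [Set.mem_toFinset] at h₁ h₂
        simp only [h₁, h₂, dif_pos]
        exact hg _ _ (fun h => hne (congrArg Subtype.val h)) ⟨v, hv₁, hv₂⟩⟩
    rwa [hH, Set.ncard_coe_finset, Set.ncard_eq_toFinset_card']
end
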